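/- For every i ∈ I and all x', z' ∈ D, if d[l^{(i)}](x', z') < r''(σᵢ(x')), then d[l^{(i)}](x', z') = dᵢ(σᵢ(x'), σᵢ(z')). -/

import Mathlib

noncomputable section

open Set
open scoped ENNReal

/-- The Euclidean plane `ℝ²` with the Euclidean metric. -/
abbrev E2 : Type := EuclideanSpace ℝ (Fin 2)

/-- Vertices of the fixed closed regular (equilateral) triangle of side length 1. -/
def p0 : E2 := !₂[0, 0]
def p1 : E2 := !₂[1, 0]
def p2 : E2 := !₂[1 / 2, Real.sqrt 3 / 2]

/-- `Dtri` is the fixed closed regular triangle in `ℝ²` with edge length 1. -/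
def Dtri : Set E2 := convexHull ℝ {p0, p1, p2}

/-- `V0` is the set of the three vertices of `Dtri`. -/
def V0 : Set E2 := {p0, p1, p2}

/-- The three closed edges of `Dtri`. -/
def e01 : Set E2 := segment ℝ p0 p1
def e12 : Set E2 := segment ℝ p1 p2
def e02 : Set E2 := segment ℝ p0 p2

/-- `E0` is the set of the three closed edges of `Dtri`. -/
def E0 : Set (Set E2) := {e01, e12, e02}

/-- The open edge `e° = e ∖ V₀`. -/
def eo (e : Set E2) : Set E2 := e \ V0

/-- `Do = D°` is the interior of `Dtri` in `ℝ²`. -/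
def Do : Set E2 := interior Dtri

/-- `l : E₀ → ℝ` is positive and satisfies the strict triangle inequalities:
`l e₁ + l e₂ > l e₃` whenever `{e₁, e₂, e₃} = E₀`. -/
def TriIneq (l : Set E2 → ℝ) : Prop :=
  (∀ e ∈ E0, 0 < l e) ∧
  ∀ e₁ e₂ e₃ : Set E2, ({e₁, e₂, e₃} : Set (Set E2)) = E0 → l e₁ + l e₂ > l e₃

/-- A linear map `f : ℝ² → ℝ²` realizes the edge lengths `l`, i.e. for each `e ∈ E₀`
the segment `f(e)` has Euclidean length `l e`. -/
def Realizes (f : E2 →ₗ[ℝ] E2) (l : Set E2 → ℝ) : Prop :=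
  dist (f p0) (f p1) = l e01 ∧ dist (f p1) (f p2) = l e12 ∧ dist (f p0) (f p2) = l e02

/-- The metric `d[l]` on `Dtri`, defined by `d[l](x,y) = |f x - f y|₂` for a linear map `f`
realizing the edge lengths `l` (this is independent of the choice of `f`). -/
def dD (l : Set E2 → ℝ) (x y : E2) : ℝ :=
  letI := Classical.propDecidable (∃ f : E2 →ₗ[ℝ] E2, Realizes f l)
  if h : ∃ f : E2 →ₗ[ℝ] E2, Realizes f l then dist (h.choose x) (h.choose y) else 0

/-- A triangulation `T = (σᵢ)_{i ∈ I}`, `I = Fin n`, of a topological space `S`: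
a finite family of continuous maps `σᵢ : Dtri → S` such that
(a) `σᵢ` is injective on each open edge, (b) `σᵢ` is injective on `D°`,
(c) `S` is the disjoint union of `⋃ᵢ σᵢ(V₀)`, the sets `σᵢ(D°)`, and the distinct sets
among the `σᵢ(e°)`, and (d) glued edges are identified by a linear homeomorphism. -/
structure Triangulation (S : Type) [TopologicalSpace S] (n : ℕ) where
  σ : Fin n → E2 → S
  continuousOn : ∀ i, ContinuousOn (σ i) Dtri
  inj_edge : ∀ i, ∀ e ∈ E0, InjOn (σ i) (eo e)
  inj_int : ∀ i, InjOn (σ i) Do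
  cover : (⋃ i, σ i '' V0) ∪ (⋃ i, σ i '' Do) ∪ (⋃ i, ⋃ e ∈ E0, σ i '' eo e) = univ
  disj_int : ∀ i j, i ≠ j → Disjoint (σ i '' Do) (σ j '' Do)
  disj_vert_int : ∀ j, Disjoint (⋃ i, σ i '' V0) (σ j '' Do)
  disj_vert_edge : ∀ j, ∀ e ∈ E0, Disjoint (⋃ i, σ i '' V0) (σ j '' eo e)
  disj_int_edge : ∀ i j, ∀ e ∈ E0, Disjoint (σ i '' Do) (σ j '' eo e)
  edge_eq_or_disjoint : ∀ i j, ∀ e ∈ E0, ∀ e' ∈ E0,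
    σ i '' eo e = σ j '' eo e' ∨ Disjoint (σ i '' eo e) (σ j '' eo e')
  glue : ∀ i j, ∀ e ∈ E0, ∀ e' ∈ E0, σ i '' eo e = σ j '' eo e' →
    ∃ A : E2 →ᵃ[ℝ] E2, A '' e = e' ∧ ∀ x ∈ e, σ j (A x) = σ i x

variable {S : Type} [TopologicalSpace S] {n : ℕ}

/-- `l ∈ ℝ^{E(T)}_Δ`: `l` assigns positive lengths to the edges of `T` satisfying the
strict triangle inequalities in each triangle. -/
def TriIneqT (T : Triangulation S n) (l : Set S → ℝ) : Prop :=
  (∀ (i : Fin n), ∀ e ∈ E0, 0 < l (T.σ i '' e)) ∧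
  ∀ (i : Fin n), ∀ e₁ e₂ e₃ : Set E2, ({e₁, e₂, e₃} : Set (Set E2)) = E0 →
    l (T.σ i '' e₁) + l (T.σ i '' e₂) > l (T.σ i '' e₃)

/-- The restricted edge lengths `l^{(i)}` on the triangle `σᵢ(D)`: `l^{(i)}_e = l_{σᵢ(e)}`. -/
def lRes (T : Triangulation S n) (l : Set S → ℝ) (i : Fin n) : Set E2 → ℝ :=
  fun e => l (T.σ i '' e)

/-- `dᵢ(x,y) = min { d[l^{(i)}](x',y') : x' ∈ σᵢ⁻¹(x), y' ∈ σᵢ⁻¹(y) }` for `x, y ∈ σᵢ(D)`. -/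
def dTri (T : Triangulation S n) (l : Set S → ℝ) (i : Fin n) (x y : S) : ℝ :=
  sInf { r | ∃ x' ∈ Dtri, ∃ y' ∈ Dtri,
    T.σ i x' = x ∧ T.σ i y' = y ∧ r = dD (lRes T l i) x' y' }

/-- The set of sums `Σ_j d_{i_j}(x_{j-1}, x_j)` over chains from `x` to `y`. -/
def chainSums (T : Triangulation S n) (l : Set S → ℝ) (x y : S) : Set ℝ :=
  { r | ∃ (k : ℕ) (c : ℕ → S) (idx : ℕ → Fin n),
      c 0 = x ∧ c k = y ∧
      (∀ j < k, c j ∈ T.σ (idx j) '' Dtri ∧ c (j + 1) ∈ T.σ (idx j) '' Dtri) ∧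
      r = ∑ j ∈ Finset.range k, dTri T l (idx j) (c j) (c (j + 1)) }

/-- The glued metric `d[l]` on `S`. -/
def dGlue (T : Triangulation S n) (l : Set S → ℝ) (x y : S) : ℝ :=
  sInf (chainSums T l x y)

/-- `K(x)`: the union of the edges of `Dtri` not containing `x`. -/
def Kset (x : E2) : Set E2 := ⋃₀ {e ∈ E0 | x ∉ e}

/-- The distance from `x` to `K(x)` in `(Dtri, d[l'])`. -/
def rObs (l' : Set E2 → ℝ) (x : E2) : ℝ := sInf { r | ∃ y ∈ Kset x, r = dD l' x y }

/-- `r(x) = min { rᵢ(x') : i ∈ I, x' ∈ σᵢ⁻¹(x) }` for `x ∈ S`. -/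
def rS (T : Triangulation S n) (l : Set S → ℝ) (x : S) : ℝ :=
  sInf { r | ∃ i : Fin n, ∃ x' ∈ Dtri, T.σ i x' = x ∧ r = rObs (lRes T l i) x' }

/-- The set of half-distances `½ d[l^{(i)}](x', x'')` between distinct preimages of `x`. -/
def rPair (T : Triangulation S n) (l : Set S → ℝ) (x : S) : Set ℝ :=
  { r | ∃ i : Fin n, ∃ x' ∈ Dtri, ∃ x'' ∈ Dtri,
      T.σ i x' = x ∧ T.σ i x'' = x ∧ x' ≠ x'' ∧ r = dD (lRes T l i) x' x'' / 2 }

/-- `r''(x) = min { r(x), r'(x) }`, where `r'(x)` is the infimum of the half-distances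
between distinct preimages of `x` (interpreted as `+∞`, i.e. dropped, if there is none). -/
def rPP (T : Triangulation S n) (l : Set S → ℝ) (x : S) : ℝ :=
  sInf ({rS T l x} ∪ rPair T l x)

/-!
Let `(x₁, z₁)` compete with `(x', z')` in the minimum defining `dᵢ`. Since `x'` is closer to `z'`
than to `K(x')`, every edge through `z'` also passes through `x'`. If `z'` is a vertex then
`x' = z'`; if `z'` is interior then `z₁ = z'`; and if `z'` lies on an open edge `e`, the gluing map
of `e` to the edge through `z₁` is affine between edges of equal length, hence an isometry. In each
case some `x₂` in the fibre of `x'` satisfies `d(x₂, z₁) = d(x', z')`. Either `x₁ = x₂`, or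
`d(x₁, x₂) ≥ 2 r''`, and then
`d(x₁, z₁) ≥ d(x₁, x₂) - d(x₂, z₁) > 2 d(x', z') - d(x', z') = d(x', z')`.
-/

section AffineBasis

variable {ι 𝕜 V : Type*} [Finite ι] [AddCommGroup V]

lemma eq_apply_of_forall_coord_eq_zero [Ring 𝕜] [Module 𝕜 V] (b : AffineBasis ι 𝕜 V) {x : V}
    {k : ι} (h : ∀ m ≠ k, b.coord m x = 0) : x = b k := by
  cases nonempty_fintype ι
  have hk : b.coord k x = 1 := by
    rw [← b.sum_coord_apply_eq_one x, Fintype.sum_eq_single k h]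
  rw [← b.linear_combination_coord_eq_self x, Fintype.sum_eq_single k, hk, one_smul]
  intro m hm
  rw [h m hm, zero_smul]

lemma mem_convexHull_image_compl_singleton_iff [Field 𝕜] [LinearOrder 𝕜] [IsStrictOrderedRing 𝕜]
    [Module 𝕜 V] (b : AffineBasis ι 𝕜 V) {x : V} {k : ι} :
    x ∈ convexHull 𝕜 (b '' {k}ᶜ) ↔ x ∈ convexHull 𝕜 (range b) ∧ b.coord k x = 0 := by
  classical
  cases nonempty_fintype ι
  refine ⟨fun hx ↦ ⟨convexHull_mono (image_subset_range b _) hx, ?_⟩, fun ⟨hx, hk⟩ ↦ ?_⟩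
  · refine convexHull_min ?_ ((convex_singleton (0 : 𝕜)).affine_preimage (b.coord k)) hx
    rintro _ ⟨m, hm, rfl⟩
    exact b.coord_apply_ne (Ne.symm hm)
  · rw [b.convexHull_eq_nonneg_coord] at hx
    have hsum : ∑ m ∈ {k}ᶜ, b.coord m x = 1 := by
      simpa [Fintype.sum_eq_add_sum_compl k, hk] using b.sum_coord_apply_eq_one x
    have hcomb : ∑ m ∈ {k}ᶜ, b.coord m x • b m = x := by
      simpa [Fintype.sum_eq_add_sum_compl k, hk] using b.linear_combination_coord_eq_self x
    rw [← hcomb]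
    refine (convex_convexHull 𝕜 _).sum_mem (fun m _ ↦ hx m) hsum fun m hm ↦
      subset_convexHull 𝕜 _ (mem_image_of_mem b ?_)
    simpa using hm

end AffineBasis

lemma diam_segment {W : Type*} [SeminormedAddCommGroup W] [NormedSpace ℝ W] (p q : W) :
    Metric.diam (segment ℝ p q) = dist p q := by
  rw [← convexHull_pair, convexHull_diam, Metric.diam_pair]

lemma dist_map_eq_of_diam_image_segment_eq {V W₁ W₂ : Type*} [AddCommGroup V] [Module ℝ V]
    [SeminormedAddCommGroup W₁] [NormedSpace ℝ W₁] [SeminormedAddCommGroup W₂] [NormedSpace ℝ W₂]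
    (g : V →ᵃ[ℝ] W₁) (h : V →ᵃ[ℝ] W₂) {p q x y : V}
    (hdiam : Metric.diam (g '' segment ℝ p q) = Metric.diam (h '' segment ℝ p q))
    (hx : x ∈ segment ℝ p q) (hy : y ∈ segment ℝ p q) :
    dist (g x) (g y) = dist (h x) (h y) := by
  have hpq : dist (g p) (g q) = dist (h p) (h q) := by
    simpa only [image_segment, diam_segment] using hdiam
  rw [segment_eq_image_lineMap] at hx hy
  obtain ⟨s, -, rfl⟩ := hx
  obtain ⟨t, -, rfl⟩ := hy
  simp only [AffineMap.apply_lineMap, dist_lineMap_lineMap, hpq]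

lemma affineIndependent_vertices : AffineIndependent ℝ ![p0, p1, p2] := by
  rw [affineIndependent_iff_not_collinear_set, collinear_iff_of_mem (mem_insert p0 _)]
  rintro ⟨v, hv⟩
  obtain ⟨s, hs⟩ := hv p1 (by simp)
  obtain ⟨t, ht⟩ := hv p2 (by simp)
  have hs0 : s * v 0 = 1 := by simpa [p0, p1] using (congr($hs 0)).symm
  have hs1 : s * v 1 = 0 := by simpa [p0, p1] using (congr($hs 1)).symm
  have ht1 : √3 / 2 = t * v 1 := by simpa [p0, p2] using congr($ht 1)
  have hv1 : v 1 = 0 := (mul_eq_zero.1 hs1).resolve_left (left_ne_zero_of_mul_eq_one hs0)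
  simp [hv1] at ht1

/-- The vertices of `Dtri` as an affine basis of the plane; its coordinates are the barycentric
coordinates of the triangle. -/
def triBasis : AffineBasis (Fin 3) ℝ E2 where
  toFun := ![p0, p1, p2]
  ind' := affineIndependent_vertices
  tot' := by
    rw [affineIndependent_vertices.affineSpan_eq_top_iff_card_eq_finrank_add_one]
    simp

lemma coe_triBasis : ⇑triBasis = ![p0, p1, p2] := rfl

lemma range_triBasis : range triBasis = V0 := by
  rw [coe_triBasis, Matrix.range_cons, Matrix.range_cons_cons_empty, singleton_union, V0]

lemma Dtri_eq_convexHull_range : Dtri = convexHull ℝ (range triBasis) := by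
  rw [range_triBasis, Dtri, V0]

/-- The edge of `Dtri` opposite to its `k`-th vertex. -/
def oppEdge (k : Fin 3) : Set E2 := convexHull ℝ (triBasis '' {k}ᶜ)

lemma mem_oppEdge_iff {x : E2} {k : Fin 3} :
    x ∈ oppEdge k ↔ x ∈ Dtri ∧ triBasis.coord k x = 0 := by
  rw [oppEdge, mem_convexHull_image_compl_singleton_iff, Dtri_eq_convexHull_range]

lemma oppEdge_eq : oppEdge = ![e12, e02, e01] := by
  have h0 : ({0}ᶜ : Set (Fin 3)) = {1, 2} := by ext k; fin_cases k <;> simp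
  have h1 : ({1}ᶜ : Set (Fin 3)) = {0, 2} := by ext k; fin_cases k <;> simp
  have h2 : ({2}ᶜ : Set (Fin 3)) = {0, 1} := by ext k; fin_cases k <;> simp
  ext1 k
  fin_cases k
  · simp [oppEdge, h0, image_pair, coe_triBasis, e12]
  · simp [oppEdge, h1, image_pair, coe_triBasis, e02]
  · simp [oppEdge, h2, image_pair, coe_triBasis, e01]

lemma range_oppEdge : range oppEdge = E0 := by
  rw [oppEdge_eq, Matrix.range_cons, Matrix.range_cons_cons_empty, singleton_union, E0,
    pair_comm e02, insert_comm]

lemma subset_Dtri_of_mem_E0 {e : Set E2} (he : e ∈ E0) : e ⊆ Dtri := by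
  obtain ⟨k, rfl⟩ := range_oppEdge ▸ he
  exact fun x hx ↦ (mem_oppEdge_iff.1 hx).1

lemma V0_subset_Dtri : V0 ⊆ Dtri := subset_convexHull ℝ _

lemma mem_Do_iff {x : E2} : x ∈ Do ↔ ∀ k, 0 < triBasis.coord k x := by
  rw [Do, Dtri_eq_convexHull_range, triBasis.interior_convexHull, mem_ofPred_eq]

lemma mem_V0_or_mem_Do_or_mem_eo {x : E2} (hx : x ∈ Dtri) :
    x ∈ V0 ∨ x ∈ Do ∨ ∃ e ∈ E0, x ∈ eo e := by
  by_cases hV : x ∈ V0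
  · exact Or.inl hV
  by_cases hD : x ∈ Do
  · exact Or.inr (Or.inl hD)
  obtain ⟨k, hk⟩ : ∃ k, triBasis.coord k x ≤ 0 := by simpa [mem_Do_iff] using hD
  have hx0 : 0 ≤ triBasis.coord k x := by
    rw [Dtri_eq_convexHull_range, triBasis.convexHull_eq_nonneg_coord] at hx
    exact hx k
  have he : x ∈ oppEdge k := mem_oppEdge_iff.2 ⟨hx, le_antisymm hk hx0⟩
  exact Or.inr (Or.inr ⟨oppEdge k, range_oppEdge ▸ mem_range_self k, he, hV⟩)

lemma eq_of_mem_V0_of_forall_mem_edge {x z : E2} (hz : z ∈ V0)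
    (h : ∀ e ∈ E0, z ∈ e → x ∈ e) : x = z := by
  obtain ⟨k, rfl⟩ := range_triBasis ▸ hz
  refine eq_apply_of_forall_coord_eq_zero triBasis fun m hm ↦ ?_
  have hkm : triBasis k ∈ oppEdge m :=
    mem_oppEdge_iff.2 ⟨V0_subset_Dtri hz, triBasis.coord_apply_ne hm⟩
  exact (mem_oppEdge_iff.1 (h _ (range_oppEdge ▸ mem_range_self m) hkm)).2

lemma Realizes.diam_image {f : E2 →ₗ[ℝ] E2} {l : Set E2 → ℝ} (hf : Realizes f l) {e : Set E2}
    (he : e ∈ E0) : Metric.diam (f '' e) = l e := by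
  have hseg (p q : E2) : Metric.diam (f '' segment ℝ p q) = dist (f p) (f q) := by
    rw [← diam_segment, ← LinearMap.coe_toAffineMap, image_segment]
  obtain ⟨h01, h12, h02⟩ := hf
  rcases he with rfl | rfl | rfl
  exacts [(hseg p0 p1).trans h01, (hseg p1 p2).trans h12, (hseg p0 p2).trans h02]

lemma exists_linearMap_apply_vertices (u w : E2) :
    ∃ f : E2 →ₗ[ℝ] E2, f p0 = 0 ∧ f p1 = u ∧ f p2 = w := by
  have hp0 : p0 = 0 := by ext k; fin_cases k <;> simp [p0]
  have hcoord {k : Fin 3} (hk : k ≠ 0) (m : Fin 3) :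
      (triBasis.coord k).linear (triBasis m) = triBasis.coord k (triBasis m) := by
    have h := (triBasis.coord k).linearMap_vsub (triBasis m) (triBasis 0)
    rwa [triBasis.coord_apply_ne hk, show triBasis 0 = 0 from hp0, vsub_eq_sub, vsub_eq_sub,
      sub_zero, sub_zero] at h
  let f := (triBasis.coord 1).linear.smulRight u + (triBasis.coord 2).linear.smulRight w
  have hf (m : Fin 3) :
      f (triBasis m) = triBasis.coord 1 (triBasis m) • u + triBasis.coord 2 (triBasis m) • w := by
    simp only [f, LinearMap.add_apply, LinearMap.smulRight_apply, hcoord one_ne_zero,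
      hcoord (k := 2) (by decide)]
  refine ⟨f, ?_, (hf 1).trans ?_, (hf 2).trans ?_⟩
  · rw [hp0, map_zero]
  · simp
  · simp

lemma exists_norm_eq_norm_eq_dist_eq {a b c : ℝ} (ha : 0 < a) (hab : |a - b| ≤ c)
    (hc : c ≤ a + b) : ∃ u w : E2, ‖u‖ = a ∧ ‖w‖ = b ∧ dist u w = c := by
  obtain ⟨hab₁, hab₂⟩ := abs_le.1 hab
  have hb0 : 0 ≤ b := by linarith
  have hc0 : 0 ≤ c := by linarith
  -- The first coordinate of `w` is given by the law of cosines.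
  set t := (a ^ 2 + b ^ 2 - c ^ 2) / (2 * a) with ht
  have hta : 2 * a * t = a ^ 2 + b ^ 2 - c ^ 2 := by rw [ht]; field_simp
  have htb : t ^ 2 ≤ b ^ 2 := by
    refine sq_le_sq' ?_ ?_ <;> refine le_of_mul_le_mul_left ?_ (mul_pos two_pos ha) <;> nlinarith
  refine ⟨!₂[a, 0], !₂[t, √(b ^ 2 - t ^ 2)], ?_, ?_, ?_⟩
  · simp [EuclideanSpace.norm_eq, Real.sqrt_sq ha.le]
  · simp [EuclideanSpace.norm_eq, Real.sq_sqrt (sub_nonneg.2 htb), Real.sqrt_sq hb0]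
  · have hsq : (a - t) ^ 2 + √(b ^ 2 - t ^ 2) ^ 2 = c ^ 2 := by
      rw [Real.sq_sqrt (sub_nonneg.2 htb)]
      linarith
    simp [EuclideanSpace.dist_eq, Real.dist_eq, hsq, Real.sqrt_sq hc0]

lemma TriIneq.exists_realizes {l : Set E2 → ℝ} (hl : TriIneq l) :
    ∃ f : E2 →ₗ[ℝ] E2, Realizes f l := by
  obtain ⟨hpos, htri⟩ := hl
  have h₁ : l e12 < l e01 + l e02 := htri e01 e02 e12 (by rw [E0, pair_comm])
  have h₂ : l e02 < l e01 + l e12 := htri e01 e12 e02 rfl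
  have h₃ : l e01 < l e12 + l e02 := htri e12 e02 e01 (by rw [E0, insert_comm e01, pair_comm e01])
  obtain ⟨u, w, hu, hw, huw⟩ := exists_norm_eq_norm_eq_dist_eq (hpos e01 (mem_insert _ _))
    (abs_le.2 ⟨by linarith, by linarith⟩) h₁.le
  obtain ⟨f, hf0, hf1, hf2⟩ := exists_linearMap_apply_vertices u w
  refine ⟨f, ?_, ?_, ?_⟩ <;> simp only [hf0, hf1, hf2, dist_zero_left, hu, hw, huw]

lemma TriIneqT.triIneq {T : Triangulation S n} {l : Set S → ℝ} (hl : TriIneqT T l) (i : Fin n) :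
    TriIneq (lRes T l i) :=
  ⟨hl.1 i, hl.2 i⟩

open Classical in
/-- The linear map in terms of which `dD l` is defined: a map realizing `l` if there is one, and
`0` otherwise, which accounts for the value `0` of `dD l` in that case. -/
def realization (l : Set E2 → ℝ) : E2 →ₗ[ℝ] E2 :=
  if h : ∃ f : E2 →ₗ[ℝ] E2, Realizes f l then h.choose else 0

lemma realizes_realization {l : Set E2 → ℝ} (h : ∃ f : E2 →ₗ[ℝ] E2, Realizes f l) :
    Realizes (realization l) l := by
  rw [realization, dif_pos h]
  exact h.choose_spec

lemma dD_eq_dist_realization (l : Set E2 → ℝ) (x y : E2) :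
    dD l x y = dist (realization l x) (realization l y) := by
  by_cases h : ∃ f : E2 →ₗ[ℝ] E2, Realizes f l
  · rw [dD, dif_pos h, realization, dif_pos h]
  · rw [dD, dif_neg h, realization, dif_neg h, LinearMap.zero_apply, LinearMap.zero_apply,
      dist_self]

lemma dD_self (l : Set E2 → ℝ) (x : E2) : dD l x x = 0 := by
  rw [dD_eq_dist_realization, dist_self]

lemma dD_nonneg (l : Set E2 → ℝ) (x y : E2) : 0 ≤ dD l x y := by
  rw [dD_eq_dist_realization]
  exact dist_nonneg

lemma dD_triangle_right (l : Set E2 → ℝ) (x y z : E2) : dD l x y ≤ dD l x z + dD l y z := by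
  simp only [dD_eq_dist_realization]
  exact dist_triangle_right _ _ _

lemma dD_map_eq_of_image_edge_eq {l l' : Set E2 → ℝ} (hl : ∃ f : E2 →ₗ[ℝ] E2, Realizes f l)
    (hl' : ∃ f : E2 →ₗ[ℝ] E2, Realizes f l') {e e' : Set E2} (he : e ∈ E0) (he' : e' ∈ E0)
    {A : E2 →ᵃ[ℝ] E2} (hA : A '' e = e') (hlen : l' e' = l e) {x z : E2} (hx : x ∈ e)
    (hz : z ∈ e) : dD l' (A x) (A z) = dD l x z := by
  obtain ⟨p, q, rfl⟩ : ∃ p q, e = segment ℝ p q := by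
    rcases he with rfl | rfl | rfl
    exacts [⟨p0, p1, rfl⟩, ⟨p1, p2, rfl⟩, ⟨p0, p2, rfl⟩]
  rw [dD_eq_dist_realization, dD_eq_dist_realization]
  refine dist_map_eq_of_diam_image_segment_eq ((realization l').toAffineMap.comp A)
    (realization l).toAffineMap ?_ hx hz
  rw [AffineMap.coe_comp, image_comp, hA, LinearMap.coe_toAffineMap, LinearMap.coe_toAffineMap,
    (realizes_realization hl').diam_image he', (realizes_realization hl).diam_image he, hlen]

namespace Triangulation

variable (T : Triangulation S n) {i j : Fin n} {z w : E2}

lemma eq_and_eq_of_mem_Do (hz : z ∈ Do) (hw : w ∈ Dtri) (h : T.σ j w = T.σ i z) :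
    j = i ∧ w = z := by
  have hzi : T.σ j w ∈ T.σ i '' Do := ⟨z, hz, h.symm⟩
  rcases mem_V0_or_mem_Do_or_mem_eo hw with hwV | hwD | ⟨e, he, hwe⟩
  · exact (disjoint_left.1 (T.disj_vert_int i) (mem_iUnion.2 ⟨j, w, hwV, rfl⟩) hzi).elim
  · obtain rfl : j = i := by
      by_contra hji
      exact disjoint_left.1 (T.disj_int j i hji) ⟨w, hwD, rfl⟩ hzi
    exact ⟨rfl, T.inj_int j hwD hz h⟩
  · exact (disjoint_left.1 (T.disj_int_edge i j e he) hzi ⟨w, hwe, rfl⟩).elim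

lemma exists_mem_eo_of_mem_eo {e : Set E2} (he : e ∈ E0) (hz : z ∈ eo e) (hw : w ∈ Dtri)
    (h : T.σ j w = T.σ i z) : ∃ e' ∈ E0, w ∈ eo e' := by
  have hze : T.σ j w ∈ T.σ i '' eo e := ⟨z, hz, h.symm⟩
  rcases mem_V0_or_mem_Do_or_mem_eo hw with hwV | hwD | hwe
  · exact (disjoint_left.1 (T.disj_vert_edge i e he) (mem_iUnion.2 ⟨j, w, hwV, rfl⟩) hze).elim
  · exact (disjoint_left.1 (T.disj_int_edge j i e he) ⟨w, hwD, rfl⟩ hze).elim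
  · exact hwe

lemma exists_affineMap_of_mem_eo {e : Set E2} (he : e ∈ E0) (hz : z ∈ eo e) (hw : w ∈ Dtri)
    (h : T.σ j w = T.σ i z) :
    ∃ e' ∈ E0, ∃ A : E2 →ᵃ[ℝ] E2, A '' e = e' ∧ A z = w ∧ ∀ x ∈ e, T.σ j (A x) = T.σ i x := by
  obtain ⟨e', he', hwe'⟩ := T.exists_mem_eo_of_mem_eo he hz hw h
  have heq : T.σ i '' eo e = T.σ j '' eo e' :=
    (T.edge_eq_or_disjoint i j e he e' he').resolve_right
      (not_disjoint_iff.2 ⟨T.σ j w, ⟨z, hz, h.symm⟩, w, hwe', rfl⟩)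
  obtain ⟨A, hA, hAσ⟩ := T.glue i j e he e' he' heq
  have hAz : A z ∈ eo e' := by
    refine ⟨hA ▸ mem_image_of_mem A hz.1, fun hV ↦ ?_⟩
    exact disjoint_left.1 (T.disj_vert_edge i e he) (mem_iUnion.2 ⟨j, A z, hV, rfl⟩)
      ⟨z, hz, (hAσ z hz.1).symm⟩
  exact ⟨e', he', A, hA, T.inj_edge j e' he' hAz hwe' ((hAσ z hz.1).trans h.symm), hAσ⟩

lemma exists_fiber_dD_eq (l : Set S → ℝ) (hi : ∃ f : E2 →ₗ[ℝ] E2, Realizes f (lRes T l i))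
    (hj : ∃ f : E2 →ₗ[ℝ] E2, Realizes f (lRes T l j)) {x : E2} (hx : x ∈ Dtri) (hz : z ∈ Dtri)
    (hw : w ∈ Dtri) (hxz : ∀ e ∈ E0, z ∈ e → x ∈ e) (h : T.σ j w = T.σ i z) :
    ∃ y ∈ Dtri, T.σ j y = T.σ i x ∧ dD (lRes T l j) y w = dD (lRes T l i) x z := by
  rcases mem_V0_or_mem_Do_or_mem_eo hz with hzV | hzD | ⟨e, he, hze⟩
  · obtain rfl := eq_of_mem_V0_of_forall_mem_edge hzV hxz
    exact ⟨w, hw, h, by rw [dD_self, dD_self]⟩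
  · obtain ⟨rfl, rfl⟩ := T.eq_and_eq_of_mem_Do hzD hw h
    exact ⟨x, hx, rfl, rfl⟩
  · obtain ⟨e', he', A, hA, rfl, hAσ⟩ := T.exists_affineMap_of_mem_eo he hze hw h
    have hxe : x ∈ e := hxz e he hze.1
    have hlen : lRes T l j e' = lRes T l i e := by
      rw [lRes, lRes, ← hA, image_image, image_congr hAσ]
    exact ⟨A x, subset_Dtri_of_mem_E0 he' (hA ▸ mem_image_of_mem A hxe), hAσ x hxe,
      dD_map_eq_of_image_edge_eq hi hj he he' hA hlen hxe hze.1⟩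

end Triangulation

lemma rObs_nonneg (l : Set E2 → ℝ) (x : E2) : 0 ≤ rObs l x := by
  refine Real.sInf_nonneg ?_
  rintro _ ⟨y, -, rfl⟩
  exact dD_nonneg l x y

section Radius

variable (T : Triangulation S n) (l : Set S → ℝ)

lemma rS_nonneg (w : S) : 0 ≤ rS T l w := by
  refine Real.sInf_nonneg ?_
  rintro _ ⟨i, x, -, -, rfl⟩
  exact rObs_nonneg _ x

lemma rPP_le_of_mem {w : S} {r : ℝ} (hr : r ∈ {rS T l w} ∪ rPair T l w) : rPP T l w ≤ r := by
  refine csInf_le ⟨0, ?_⟩ hr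
  rintro _ (rfl | ⟨i, x, -, y, -, -, -, -, rfl⟩)
  · exact rS_nonneg T l w
  · exact div_nonneg (dD_nonneg _ x y) zero_le_two

lemma rPP_le_dD_of_mem_Kset {i : Fin n} {x y : E2} (hx : x ∈ Dtri) (hy : y ∈ Kset x) :
    rPP T l (T.σ i x) ≤ dD (lRes T l i) x y := by
  have hS : rS T l (T.σ i x) ≤ rObs (lRes T l i) x := by
    refine csInf_le ⟨0, ?_⟩ ⟨i, x, hx, rfl, rfl⟩
    rintro _ ⟨j, a, -, -, rfl⟩
    exact rObs_nonneg _ a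
  have hObs : rObs (lRes T l i) x ≤ dD (lRes T l i) x y := by
    refine csInf_le ⟨0, ?_⟩ ⟨y, hy, rfl⟩
    rintro _ ⟨a, -, rfl⟩
    exact dD_nonneg _ x a
  exact (rPP_le_of_mem T l (Or.inl rfl)).trans (hS.trans hObs)

lemma two_mul_rPP_le_dD {i : Fin n} {x y : E2} {w : S} (hx : x ∈ Dtri) (hy : y ∈ Dtri)
    (hxw : T.σ i x = w) (hyw : T.σ i y = w) (hxy : x ≠ y) :
    2 * rPP T l w ≤ dD (lRes T l i) x y := by
  have hhalf : rPP T l w ≤ dD (lRes T l i) x y / 2 :=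
    rPP_le_of_mem T l (Or.inr ⟨i, x, hx, y, hy, hxw, hyw, hxy, rfl⟩)
  linarith

lemma mem_edge_of_dD_lt_rPP {i : Fin n} {x z : E2} (hx : x ∈ Dtri)
    (hlt : dD (lRes T l i) x z < rPP T l (T.σ i x)) {e : Set E2} (he : e ∈ E0) (hz : z ∈ e) :
    x ∈ e := by
  by_contra hxe
  exact hlt.not_ge (rPP_le_dD_of_mem_Kset T l hx ⟨e, ⟨he, hxe⟩, hz⟩)

end Radius

theorem dD_eq_dTri_of_lt_rPP_general {S : Type} [TopologicalSpace S] {n : ℕ}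
    (T : Triangulation S n) (l : Set S → ℝ) (i : Fin n)
    (hi : ∃ f : E2 →ₗ[ℝ] E2, Realizes f (lRes T l i)) {x z : E2} (hx : x ∈ Dtri) (hz : z ∈ Dtri)
    (hlt : dD (lRes T l i) x z < rPP T l (T.σ i x)) :
    dD (lRes T l i) x z = dTri T l i (T.σ i x) (T.σ i z) := by
  rw [dTri, eq_comm]
  refine IsLeast.csInf_eq ⟨⟨x, hx, z, hz, rfl, rfl, rfl⟩, ?_⟩
  rintro _ ⟨x₁, hx₁, z₁, hz₁, hσx, hσz, rfl⟩
  obtain ⟨x₂, hx₂, hσ₂, hd⟩ := T.exists_fiber_dD_eq l hi hi hx hz hz₁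
    (fun _ ↦ mem_edge_of_dD_lt_rPP T l hx hlt) hσz
  rcases eq_or_ne x₁ x₂ with rfl | hne
  · exact hd.ge
  have hfar := two_mul_rPP_le_dD T l hx₁ hx₂ hσx hσ₂ hne
  have htri := dD_triangle_right (lRes T l i) x₁ x₂ z₁
  linarith

/-- for every `i ∈ I` and `x', z' ∈ Dtri`, if
`d[l^{(i)}](x', z') < r''(σᵢ x')`, then `d[l^{(i)}](x', z') = dᵢ(σᵢ x', σᵢ z')`. -/
theorem dD_eq_dTri_of_lt_rPP
    {S : Type} [TopologicalSpace S] [CompactSpace S] [T2Space S] [ConnectedSpace S]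
    {n : ℕ} (T : Triangulation S n) (l : Set S → ℝ) (hl : TriIneqT T l)
    (i : Fin n) (x' z' : E2) (hx' : x' ∈ Dtri) (hz' : z' ∈ Dtri)
    (hlt : dD (lRes T l i) x' z' < rPP T l (T.σ i x')) :
    dD (lRes T l i) x' z' = dTri T l i (T.σ i x') (T.σ i z') :=
  dD_eq_dTri_of_lt_rPP_general T l i (TriIneqT.triIneq hl i).exists_realizes hx' hz' hlt
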